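/- Let e be an admissible tableau supported on X(v_6). If S(2k) = B∪{4n−1,4n+2}, then e(1,2n) = 4n−2 and e(1,2n+2) ≤ 4n+1, and consequently S(1) is one of the following four sets: A∪{4n−2,4n−1,4n+1}, A∪{4n−2,4n,4n+1}, A∪{4n−2,4n−1,4n,4n+1,4n+2}, A∪{4n−2,4n−1,4n}. -/

import Mathlib

/-!
Condition (R3) and a pigeonhole argument show that every row contains exactly one of `t` and
`8n+5-t`, so (R5) says that every `t ≤ 4n+2` lies in exactly `k` of the `2k` rows
(`sum_occ`). Hence the numbers `c_i(m)` of entries `≤ m` in row `i` add up to `k m`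
(`sum_cnt`), while (R2) makes `c_i(m)` nonincreasing in `i`.

The last row has `c(2j) = j` for `2j ≤ 4n-4`, which is the average; so all rows have
`c_i(2j) = j`, and since `c_1` is maximal the first row contains the odd member of each pair
`{2j-1, 2j}`. The last row has `c(4n-2) = 2n-2`, below the average `2n-1`, so
the first row has `c_1(4n-2) = 2n`, i.e. it contains `4n-3` and `4n-2`. Finally, if
`c_1(4n+1) ≤ 2n+1`, then by the parity condition (R4) every row has
`c_i(4n+1) ≤ 2n + [4n+2 ∈ row i]`; the two sides have the same sum `k(4n+1)` over the rows, but
the inequality is strict in the last row. So `c_1(4n+1) ≥ 2n+2`, and parity leaves exactly the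
four listed sets.
-/

/-! ### Admissible tableaux -/

/-- The "small set" `S(i) = { e(i,j) : 1 ≤ j ≤ 4n+2, e(i,j) ≤ 4n+2 }` of row `i`. -/
def smallSet (n : ℕ) (e : ℕ → ℕ → ℕ) (i : ℕ) : Finset ℕ :=
  ((Finset.Icc 1 (4*n+2)).filter (fun j => e i j ≤ 4*n+2)).image (e i)

/-- `A = {1,3,5,…,4n-3}`, the odd integers `≤ 4n-3`. -/
def setA (n : ℕ) : Finset ℕ := (Finset.Icc 1 (4*n-3)).filter (fun t => ¬ 2 ∣ t)

/-- `B = {2,4,…,4n-4}`, the even integers `≤ 4n-4`. -/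
def setB (n : ℕ) : Finset ℕ := (Finset.Icc 1 (4*n-4)).filter (fun t => 2 ∣ t)

/-- An admissible tableau: `e i j ∈ {1,…,8n+4}` for `1 ≤ i ≤ 2k`, `1 ≤ j ≤ 4n+2`,
subject to the conditions (R1)–(R5). -/
structure IsAdmissible (n k : ℕ) (e : ℕ → ℕ → ℕ) : Prop where
  mem_range : ∀ i j, 1 ≤ i → i ≤ 2*k → 1 ≤ j → j ≤ 4*n+2 → 1 ≤ e i j ∧ e i j ≤ 8*n+4
  /-- (R1) rows strictly increase -/
  row_strict : ∀ i j, 1 ≤ i → i ≤ 2*k → 1 ≤ j → j < 4*n+2 → e i j < e i (j+1)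
  /-- (R2) columns are nondecreasing -/
  col_mono : ∀ i j, 1 ≤ i → i < 2*k → 1 ≤ j → j ≤ 4*n+2 → e i j ≤ e (i+1) j
  /-- (R3) no row contains both `t` and `8n+5-t` -/
  no_pair : ∀ i j j', 1 ≤ i → i ≤ 2*k → 1 ≤ j → j ≤ 4*n+2 → 1 ≤ j' → j' ≤ 4*n+2 →
    e i j + e i j' ≠ 8*n+5
  /-- (R4) each row has an even number of entries `> 4n+2` -/
  even_big : ∀ i, 1 ≤ i → i ≤ 2*k →
    Even (((Finset.Icc 1 (4*n+2)).filter (fun j => 4*n+2 < e i j)).card)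
  /-- (R5) `t` and `8n+5-t` occur equally often in the tableau -/
  balanced : ∀ t, 1 ≤ t → t ≤ 8*n+4 →
    (((Finset.Icc 1 (2*k)) ×ˢ (Finset.Icc 1 (4*n+2))).filter
      (fun p => e p.1 p.2 = t)).card =
    (((Finset.Icc 1 (2*k)) ×ˢ (Finset.Icc 1 (4*n+2))).filter
      (fun p => e p.1 p.2 = 8*n+5-t)).card

/-- The first `4n+2` entries of the one-line notation of `v₆`. -/
def bnd (n : ℕ) (j : ℕ) : ℕ :=
  if j ≤ 2*n-2 then 2*j
  else if j = 2*n-1 then 4*n-1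
  else if j = 2*n then 4*n+2
  else if j = 2*n+1 then 4*n+4
  else if j = 2*n+2 then 4*n+5
  else if j = 2*n+3 then 4*n+7
  else 2*j

/-- The tableau is supported on the Schubert variety `X(v₆)`. -/
def SupportedOnXv6 (n k : ℕ) (e : ℕ → ℕ → ℕ) : Prop :=
  ∀ j, 1 ≤ j → j ≤ 4*n+2 → e (2*k) j ≤ bnd n j

/-! ### Counting entries in rows -/

/-- The number of entries `≤ m` in row `i`. -/
def cnt (n : ℕ) (e : ℕ → ℕ → ℕ) (i m : ℕ) : ℕ :=
  ((Finset.Icc 1 (4*n+2)).filter (fun j => e i j ≤ m)).card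

/-- The number of occurrences of `t` in row `i`. -/
def occ (n : ℕ) (e : ℕ → ℕ → ℕ) (i t : ℕ) : ℕ :=
  ((Finset.Icc 1 (4*n+2)).filter (fun j => e i j = t)).card

lemma cnt_succ (n : ℕ) (e : ℕ → ℕ → ℕ) (i m : ℕ) :
    cnt n e i (m+1) = cnt n e i m + occ n e i (m+1) := by
  unfold cnt occ
  rw [← Finset.card_union_of_disjoint]
  · congr 1
    ext j
    simp only [Finset.mem_filter, Finset.mem_union]
    grind
  · rw [Finset.disjoint_left]
    intro j
    simp only [Finset.mem_filter]
    omega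

lemma row_lt {n k : ℕ} {e : ℕ → ℕ → ℕ} (he : IsAdmissible n k e)
    {i : ℕ} (h1 : 1 ≤ i) (h2 : i ≤ 2*k) {j j' : ℕ} (hj : 1 ≤ j) (hjj : j < j')
    (hj' : j' ≤ 4*n+2) : e i j < e i j' := by
  induction j', hjj using Nat.le_induction with
  | base => exact he.row_strict i j h1 h2 hj (by omega)
  | succ m hm ih =>
    have := he.row_strict i m h1 h2 (by omega) (by omega)
    have := ih (by omega)
    omega

lemma row_inj {n k : ℕ} {e : ℕ → ℕ → ℕ} (he : IsAdmissible n k e)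
    {i : ℕ} (h1 : 1 ≤ i) (h2 : i ≤ 2*k) {j j' : ℕ} (hj : 1 ≤ j) (hj2 : j ≤ 4*n+2)
    (hj' : 1 ≤ j') (hj2' : j' ≤ 4*n+2) (h : e i j = e i j') : j = j' := by
  rcases lt_trichotomy j j' with hlt | heq | hlt
  · have := row_lt he h1 h2 hj hlt hj2'
    omega
  · exact heq
  · have := row_lt he h1 h2 hj' hlt hj2
    omega

lemma occ_le_one {n k : ℕ} {e : ℕ → ℕ → ℕ} (he : IsAdmissible n k e)
    {i : ℕ} (h1 : 1 ≤ i) (h2 : i ≤ 2*k) (t : ℕ) : occ n e i t ≤ 1 := by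
  unfold occ
  rw [Finset.card_le_one]
  intro a ha b hb
  simp only [Finset.mem_filter, Finset.mem_Icc] at ha hb
  exact row_inj he h1 h2 ha.1.1 ha.1.2 hb.1.1 hb.1.2 (ha.2.trans hb.2.symm)

lemma cnt_zero {n k : ℕ} {e : ℕ → ℕ → ℕ} (he : IsAdmissible n k e)
    {i : ℕ} (h1 : 1 ≤ i) (h2 : i ≤ 2*k) : cnt n e i 0 = 0 := by
  unfold cnt
  rw [Finset.card_eq_zero, Finset.filter_eq_empty_iff]
  intro j hj
  rw [Finset.mem_Icc] at hj
  have := he.mem_range i j h1 h2 hj.1 hj.2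
  omega

lemma le_cnt {n k : ℕ} {e : ℕ → ℕ → ℕ} (he : IsAdmissible n k e)
    {i : ℕ} (h1 : 1 ≤ i) (h2 : i ≤ 2*k) {j m : ℕ} (hj2 : j ≤ 4*n+2)
    (h : e i j ≤ m) : j ≤ cnt n e i m := by
  have hs : Finset.Icc 1 j ⊆ (Finset.Icc 1 (4*n+2)).filter (fun j => e i j ≤ m) := by
    intro a ha
    rw [Finset.mem_Icc] at ha
    rw [Finset.mem_filter, Finset.mem_Icc]
    refine ⟨⟨ha.1, by omega⟩, ?_⟩
    rcases eq_or_lt_of_le ha.2 with heq | hlt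
    · rw [heq]
      exact h
    · have := row_lt he h1 h2 ha.1 hlt hj2
      omega
  have := Finset.card_le_card hs
  simpa [cnt] using this

lemma cnt_lt {n k : ℕ} {e : ℕ → ℕ → ℕ} (he : IsAdmissible n k e)
    {i : ℕ} (h1 : 1 ≤ i) (h2 : i ≤ 2*k) {j m : ℕ} (hj : 1 ≤ j)
    (h : m < e i j) : cnt n e i m < j := by
  have hs : (Finset.Icc 1 (4*n+2)).filter (fun j => e i j ≤ m) ⊆ Finset.Icc 1 (j-1) := by
    intro a ha
    rw [Finset.mem_filter, Finset.mem_Icc] at ha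
    rw [Finset.mem_Icc]
    refine ⟨ha.1.1, ?_⟩
    by_contra hcon
    rcases eq_or_lt_of_le (show j ≤ a by omega) with heq | hlt
    · rw [heq] at h
      omega
    · have := row_lt he h1 h2 hj hlt ha.1.2
      omega
  have := Finset.card_le_card hs
  rw [Nat.card_Icc] at this
  unfold cnt
  omega

lemma col_le {n k : ℕ} {e : ℕ → ℕ → ℕ} (he : IsAdmissible n k e)
    {j : ℕ} (hj : 1 ≤ j) (hj2 : j ≤ 4*n+2) {i i' : ℕ} (hi : 1 ≤ i) (hii : i ≤ i')
    (hi' : i' ≤ 2*k) : e i j ≤ e i' j := by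
  induction i', hii using Nat.le_induction with
  | base => exact le_rfl
  | succ m hm ih =>
    have := he.col_mono m j (by omega) (by omega) hj hj2
    have := ih (by omega)
    omega

lemma cnt_anti {n k : ℕ} {e : ℕ → ℕ → ℕ} (he : IsAdmissible n k e)
    (m : ℕ) {i i' : ℕ} (hi : 1 ≤ i) (hii : i ≤ i') (hi' : i' ≤ 2*k) :
    cnt n e i' m ≤ cnt n e i m := by
  unfold cnt
  apply Finset.card_le_card
  intro a ha
  rw [Finset.mem_filter, Finset.mem_Icc] at ha ⊢
  exact ⟨ha.1, (col_le he ha.1.1 ha.1.2 hi hii hi').trans ha.2⟩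

/-! ### Sums over all rows -/

/-- Every row contains exactly one of `t` and `8n+5-t`: the map `x ↦ min x (8n+5-x)` is injective
on the `4n+2` entries of the row by (R3), hence onto `{1,…,4n+2}`. -/
lemma occ_add {n k : ℕ} {e : ℕ → ℕ → ℕ} (he : IsAdmissible n k e)
    {i : ℕ} (h1 : 1 ≤ i) (h2 : i ≤ 2*k) {t : ℕ} (ht : 1 ≤ t) (ht2 : t ≤ 4*n+2) :
    occ n e i t + occ n e i (8*n+5-t) = 1 := by
  have hinj : Set.InjOn (fun j => min (e i j) (8*n+5 - e i j)) (Finset.Icc 1 (4*n+2)) := by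
    intro a ha b hb hab
    simp only [Finset.coe_Icc, Set.mem_Icc] at ha hb
    have hra := he.mem_range i a h1 h2 ha.1 ha.2
    have hrb := he.mem_range i b h1 h2 hb.1 hb.2
    have hp := he.no_pair i a b h1 h2 ha.1 ha.2 hb.1 hb.2
    apply row_inj he h1 h2 ha.1 ha.2 hb.1 hb.2
    simp only at hab
    omega
  have himg : (Finset.Icc 1 (4*n+2)).image (fun j => min (e i j) (8*n+5 - e i j))
      = Finset.Icc 1 (4*n+2) := by
    apply Finset.eq_of_subset_of_card_le
    · intro x hx
      rw [Finset.mem_image] at hx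
      obtain ⟨j, hj, rfl⟩ := hx
      rw [Finset.mem_Icc] at hj ⊢
      have := he.mem_range i j h1 h2 hj.1 hj.2
      omega
    · rw [Finset.card_image_of_injOn hinj]
  have htm : t ∈ (Finset.Icc 1 (4*n+2)).image (fun j => min (e i j) (8*n+5 - e i j)) := by
    rw [himg, Finset.mem_Icc]
    exact ⟨ht, ht2⟩
  rw [Finset.mem_image] at htm
  obtain ⟨j, hj, hjt⟩ := htm
  have hj0 := hj
  rw [Finset.mem_Icc] at hj
  have hr := he.mem_range i j h1 h2 hj.1 hj.2
  have hpos : 0 < occ n e i t ∨ 0 < occ n e i (8*n+5-t) := by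
    rcases (show e i j = t ∨ e i j = 8*n+5-t by omega) with h | h
    · exact Or.inl (Finset.card_pos.mpr ⟨j, by simp only [Finset.mem_filter]; exact ⟨hj0, h⟩⟩)
    · exact Or.inr (Finset.card_pos.mpr ⟨j, by simp only [Finset.mem_filter]; exact ⟨hj0, h⟩⟩)
  have hnot : ¬ (0 < occ n e i t ∧ 0 < occ n e i (8*n+5-t)) := by
    rintro ⟨ha, hb⟩
    obtain ⟨a, ha⟩ := Finset.card_pos.mp ha
    obtain ⟨b, hb⟩ := Finset.card_pos.mp hb
    rw [Finset.mem_filter, Finset.mem_Icc] at ha hb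
    have := he.no_pair i a b h1 h2 ha.1.1 ha.1.2 hb.1.1 hb.1.2
    omega
  have := occ_le_one he h1 h2 t
  have := occ_le_one he h1 h2 (8*n+5-t)
  omega

lemma sum_occ {n k : ℕ} {e : ℕ → ℕ → ℕ} (he : IsAdmissible n k e)
    {t : ℕ} (ht : 1 ≤ t) (ht2 : t ≤ 4*n+2) :
    ∑ i ∈ Finset.Icc 1 (2*k), occ n e i t = k := by
  have hprod : ∀ s, (((Finset.Icc 1 (2*k)) ×ˢ (Finset.Icc 1 (4*n+2))).filter
      (fun p => e p.1 p.2 = s)).card = ∑ i ∈ Finset.Icc 1 (2*k), occ n e i s := by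
    intro s
    rw [Finset.card_filter, Finset.sum_product]
    simp only [occ, Finset.card_filter]
  have hb := he.balanced t ht (by omega)
  rw [hprod, hprod] at hb
  have hsum : ∑ i ∈ Finset.Icc 1 (2*k), (occ n e i t + occ n e i (8*n+5-t)) = 2*k := by
    rw [Finset.sum_congr rfl (g := fun _ => 1)]
    · simp
    · intro i hi
      rw [Finset.mem_Icc] at hi
      exact occ_add he hi.1 hi.2 ht ht2
  rw [Finset.sum_add_distrib] at hsum
  omega

lemma sum_cnt {n k : ℕ} {e : ℕ → ℕ → ℕ} (he : IsAdmissible n k e)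
    {m : ℕ} (hm : m ≤ 4*n+2) :
    ∑ i ∈ Finset.Icc 1 (2*k), cnt n e i m = k*m := by
  induction m with
  | zero =>
    rw [Nat.mul_zero]
    apply Finset.sum_eq_zero
    intro i hi
    rw [Finset.mem_Icc] at hi
    exact cnt_zero he hi.1 hi.2
  | succ m ih =>
    simp only [cnt_succ, Finset.sum_add_distrib]
    rw [ih (by omega), sum_occ he (by omega) hm]
    ring

lemma cnt_even {n k : ℕ} {e : ℕ → ℕ → ℕ} (he : IsAdmissible n k e)
    {i : ℕ} (h1 : 1 ≤ i) (h2 : i ≤ 2*k) : Even (cnt n e i (4*n+2)) := by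
  have h := he.even_big i h1 h2
  have hs := Finset.card_filter_add_card_filter_not
    (s := Finset.Icc 1 (4*n+2)) (fun j => e i j ≤ 4*n+2)
  simp only [not_le, Nat.card_Icc] at hs
  rw [Nat.even_iff] at h ⊢
  unfold cnt
  omega

lemma mem_smallSet {n k : ℕ} {e : ℕ → ℕ → ℕ} (he : IsAdmissible n k e)
    {i : ℕ} (h1 : 1 ≤ i) (h2 : i ≤ 2*k) (t : ℕ) :
    t ∈ smallSet n e i ↔ 1 ≤ t ∧ t ≤ 4*n+2 ∧ occ n e i t = 1 := by
  have hle := occ_le_one he h1 h2 t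
  have hpos : occ n e i t = 1 ↔ 0 < occ n e i t := by omega
  rw [hpos, occ, Finset.card_pos]
  simp only [smallSet, Finset.mem_image, Finset.mem_filter, Finset.mem_Icc]
  constructor
  · rintro ⟨j, ⟨hj, hj2⟩, rfl⟩
    exact ⟨(he.mem_range i j h1 h2 hj.1 hj.2).1, hj2, j, by simp [hj]⟩
  · rintro ⟨ht, ht2, j, hj⟩
    rw [Finset.mem_filter, Finset.mem_Icc] at hj
    exact ⟨j, ⟨hj.1, by omega⟩, hj.2⟩

/-! ### Comparison of the first and last rows with the average -/

/-- The first row has at least the average number of entries `≤ m`, which is `m/2`. -/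
lemma first_ge {n k : ℕ} {e : ℕ → ℕ → ℕ} (he : IsAdmissible n k e)
    (hk : 1 ≤ k) {m : ℕ} (hm : m ≤ 4*n+2) : m ≤ 2 * cnt n e 1 m := by
  have hs := sum_cnt he hm
  have hle : ∑ i ∈ Finset.Icc 1 (2*k), cnt n e i m ≤ ∑ i ∈ Finset.Icc 1 (2*k), cnt n e 1 m := by
    apply Finset.sum_le_sum
    intro i hi
    rw [Finset.mem_Icc] at hi
    exact cnt_anti he m le_rfl hi.1 hi.2
  rw [hs, Finset.sum_const, Nat.card_Icc, smul_eq_mul] at hle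
  simp only [Nat.add_sub_cancel] at hle
  refine Nat.le_of_mul_le_mul_left (c := k) ?_ hk
  linarith

/-- If the last row attains the average `j` of the counts of entries `≤ 2j`, so does every row,
since the last row has the smallest count. -/
lemma all_eq {n k : ℕ} {e : ℕ → ℕ → ℕ} (he : IsAdmissible n k e)
    {j : ℕ} (hm : 2*j ≤ 4*n+2) (hlast : cnt n e (2*k) (2*j) = j)
    {i : ℕ} (h1 : 1 ≤ i) (h2 : i ≤ 2*k) : cnt n e i (2*j) = j := by
  have hs := sum_cnt he hm
  have hge : ∀ i ∈ Finset.Icc 1 (2*k), j ≤ cnt n e i (2*j) := by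
    intro i hi
    rw [Finset.mem_Icc] at hi
    have := cnt_anti he (2*j) hi.1 hi.2 le_rfl
    omega
  have heq : ∑ i ∈ Finset.Icc 1 (2*k), j = ∑ i ∈ Finset.Icc 1 (2*k), cnt n e i (2*j) := by
    rw [hs, Finset.sum_const, Nat.card_Icc, smul_eq_mul]
    simp only [Nat.add_sub_cancel]
    ring
  exact ((Finset.sum_eq_sum_iff_of_le hge).mp heq i (Finset.mem_Icc.mpr ⟨h1, h2⟩)).symm

/-- If the last row is below the average `j` of the counts of entries `≤ 2j`, the first row is
above it. -/
lemma first_gt {n k : ℕ} {e : ℕ → ℕ → ℕ} (he : IsAdmissible n k e)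
    (hk : 1 ≤ k) {j : ℕ} (hm : 2*j ≤ 4*n+2) (hlast : cnt n e (2*k) (2*j) < j) :
    j < cnt n e 1 (2*j) := by
  by_contra! hcon
  have hs := sum_cnt he hm
  have hlt : ∑ i ∈ Finset.Icc 1 (2*k), cnt n e i (2*j) < ∑ i ∈ Finset.Icc 1 (2*k), j := by
    apply Finset.sum_lt_sum
    · intro i hi
      rw [Finset.mem_Icc] at hi
      exact (cnt_anti he (2*j) le_rfl hi.1 hi.2).trans hcon
    · exact ⟨2*k, Finset.mem_Icc.mpr ⟨by omega, le_rfl⟩, hlast⟩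
  rw [hs, Finset.sum_const, Nat.card_Icc, smul_eq_mul] at hlt
  simp only [Nat.add_sub_cancel] at hlt
  linarith

/-- If every row had at most `2n+1` entries `≤ 4n+1`, then by parity row `i` would have at most
`2n + [4n+2 ∈ row i]` of them, with equality on average; a last row with fewer than `2n` of
them excludes this. -/
lemma first_ge_top {n k : ℕ} {e : ℕ → ℕ → ℕ} (he : IsAdmissible n k e)
    (hk : 1 ≤ k) (hlast : cnt n e (2*k) (4*n+1) < 2*n) :
    2*n+2 ≤ cnt n e 1 (4*n+1) := by
  by_contra! hcon
  have hs := sum_cnt he (show 4*n+1 ≤ 4*n+2 by omega)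
  have ho := sum_occ he (show 1 ≤ 4*n+2 by omega) le_rfl
  have hlt : ∑ i ∈ Finset.Icc 1 (2*k), cnt n e i (4*n+1)
      < ∑ i ∈ Finset.Icc 1 (2*k), (2*n + occ n e i (4*n+2)) := by
    apply Finset.sum_lt_sum
    · intro i hi
      rw [Finset.mem_Icc] at hi
      have h3 := cnt_anti he (4*n+1) le_rfl hi.1 hi.2
      have h4 := cnt_even he hi.1 hi.2
      have h5 := cnt_succ n e i (4*n+1)
      have h6 := occ_le_one he hi.1 hi.2 (4*n+2)
      rw [Nat.even_iff] at h4
      rw [show 4*n+1+1 = 4*n+2 from rfl] at h5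
      omega
    · exact ⟨2*k, Finset.mem_Icc.mpr ⟨by omega, le_rfl⟩, by omega⟩
  rw [hs, Finset.sum_add_distrib, ho, Finset.sum_const, Nat.card_Icc, smul_eq_mul] at hlt
  simp only [Nat.add_sub_cancel] at hlt
  linarith

/-! ### The small set of the first row -/

/-- case (vi), `S(2k) = B ∪ {4n-1, 4n+2}`: then `e(1,2n) = 4n-2`,
`e(1,2n+2) ≤ 4n+1`, and `S(1)` is one of four possibilities. -/
theorem stmt_10 (n k : ℕ) (hn : 1 ≤ n) (hk : 1 ≤ k) (e : ℕ → ℕ → ℕ)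
    (he : IsAdmissible n k e) (hsupp : SupportedOnXv6 n k e)
    (hlast : smallSet n e (2*k) = setB n ∪ {4*n-1, 4*n+2}) :
    e 1 (2*n) = 4*n-2 ∧ e 1 (2*n+2) ≤ 4*n+1 ∧
    (smallSet n e 1 = setA n ∪ {4*n-2, 4*n-1, 4*n+1} ∨
     smallSet n e 1 = setA n ∪ {4*n-2, 4*n, 4*n+1} ∨
     smallSet n e 1 = setA n ∪ {4*n-2, 4*n-1, 4*n, 4*n+1, 4*n+2} ∨
     smallSet n e 1 = setA n ∪ {4*n-2, 4*n-1, 4*n}) := by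
  have h2k : 1 ≤ 2*k := by omega
  have hocc2 : ∀ t, 1 ≤ t → t ≤ 4*n+2 → (occ n e (2*k) t = 1 ↔
      (t ≤ 4*n-4 ∧ 2 ∣ t) ∨ t = 4*n-1 ∨ t = 4*n+2) := by
    intro t ht ht2
    have h := mem_smallSet he h2k le_rfl t
    rw [hlast] at h
    simp only [setB, Finset.mem_union, Finset.mem_filter, Finset.mem_Icc, Finset.mem_insert,
      Finset.mem_singleton] at h
    grind
  have hle2 := occ_le_one he h2k le_rfl
  have hle1 := occ_le_one he le_rfl h2k
  have hc2 : ∀ j, j ≤ 2*n-2 → cnt n e (2*k) (2*j) = j := by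
    intro j
    induction j with
    | zero => intro _; exact cnt_zero he h2k le_rfl
    | succ j ih =>
      intro hj
      have h1 := cnt_succ n e (2*k) (2*j)
      have h2 := cnt_succ n e (2*k) (2*j+1)
      have h3 := hocc2 (2*j+1) (by omega) (by omega)
      have h4 := hocc2 (2*j+1+1) (by omega) (by omega)
      have h5 := hle2 (2*j+1)
      have h6 := ih (by omega)
      rw [show 2*(j+1) = 2*j+1+1 by ring]
      omega
  obtain ⟨p, rfl⟩ : ∃ p, n = p + 1 := ⟨n - 1, by omega⟩
  -- With `n = p + 1` the six values left after the pairs `{2j-1, 2j}` are `4p+1, …, 4p+6`.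
  have hc1 : ∀ j, j ≤ 2*p → cnt (p+1) e 1 (2*j) = j := fun j hj =>
    all_eq he (by omega) (hc2 j (by omega)) le_rfl h2k
  have hocc1 : ∀ j, j < 2*p → occ (p+1) e 1 (2*j+1) = 1 ∧ occ (p+1) e 1 (2*j+2) = 0 := by
    intro j hj
    have h1 := cnt_succ (p+1) e 1 (2*j)
    have h2 := cnt_succ (p+1) e 1 (2*j+1)
    have h3 := first_ge he hk (show 2*j+1 ≤ 4*(p+1)+2 by omega)
    have h4 := hc1 j (by omega)
    have h5 := hc1 (j+1) (by omega)
    have h6 := hle1 (2*j+1)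
    rw [show 2*(j+1) = 2*j+1+1 by ring] at h5
    rw [show 2*j+1+1 = 2*j+2 by ring] at h2 h5
    omega
  have e2 : cnt (p+1) e (2*k) (4*p) = 2*p := by
    have := hc2 (2*p) (by omega)
    rwa [show 2*(2*p) = 4*p by ring] at this
  have e1 : cnt (p+1) e 1 (4*p) = 2*p := by
    have := hc1 (2*p) (by omega)
    rwa [show 2*(2*p) = 4*p by ring] at this
  have s21 := cnt_succ (p+1) e (2*k) (4*p)
  have s22 := cnt_succ (p+1) e (2*k) (4*p+1)
  have s23 := cnt_succ (p+1) e (2*k) (4*p+2)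
  have s24 := cnt_succ (p+1) e (2*k) (4*p+3)
  have s25 := cnt_succ (p+1) e (2*k) (4*p+4)
  have s11 := cnt_succ (p+1) e 1 (4*p)
  have s12 := cnt_succ (p+1) e 1 (4*p+1)
  have s13 := cnt_succ (p+1) e 1 (4*p+2)
  have s14 := cnt_succ (p+1) e 1 (4*p+3)
  have s15 := cnt_succ (p+1) e 1 (4*p+4)
  have s16 := cnt_succ (p+1) e 1 (4*p+5)
  simp only [Nat.add_assoc, Nat.reduceAdd] at s21 s22 s23 s24 s25 s11 s12 s13 s14 s15 s16
  have o21 := hocc2 (4*p+1) (by omega) (by omega)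
  have o22 := hocc2 (4*p+2) (by omega) (by omega)
  have o23 := hocc2 (4*p+3) (by omega) (by omega)
  have o24 := hocc2 (4*p+4) (by omega) (by omega)
  have o25 := hocc2 (4*p+5) (by omega) (by omega)
  have l21 := hle2 (4*p+1)
  have l22 := hle2 (4*p+2)
  have l23 := hle2 (4*p+3)
  have l24 := hle2 (4*p+4)
  have l25 := hle2 (4*p+5)
  have l11 := hle1 (4*p+1)
  have l12 := hle1 (4*p+2)
  have l13 := hle1 (4*p+3)
  have l14 := hle1 (4*p+4)
  have l15 := hle1 (4*p+5)
  have l16 := hle1 (4*p+6)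
  have g1 : 2*p+1 < cnt (p+1) e 1 (4*p+2) := by
    have := first_gt he hk (j := 2*p+1) (by omega)
      (by rw [show 2*(2*p+1) = 4*p+2 by ring]; omega)
    rwa [show 2*(2*p+1) = 4*p+2 by ring] at this
  have g2 : 2*p+4 ≤ cnt (p+1) e 1 (4*p+5) := by
    have := first_ge_top he hk (by rw [show 4*(p+1)+1 = 4*p+5 by ring]; omega)
    rw [show 4*(p+1)+1 = 4*p+5 by ring] at this
    omega
  have g3 := cnt_even he le_rfl h2k
  rw [show 4*(p+1)+2 = 4*p+6 by ring, Nat.even_iff] at g3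
  refine ⟨?_, ?_, ?_⟩
  · rcases lt_trichotomy (e 1 (2*(p+1))) (4*p+2) with h | h | h
    · have := le_cnt he le_rfl h2k (j := 2*(p+1)) (m := 4*p+1) (by omega) (by omega)
      omega
    · omega
    · have := cnt_lt he le_rfl h2k (j := 2*(p+1)) (m := 4*p+2) (by omega) h
      omega
  · by_contra! h
    have := cnt_lt he le_rfl h2k (j := 2*(p+1)+2) (m := 4*p+5) (by omega) (by omega)
    omega
  · have hodd : ∀ t, 1 ≤ t → t ≤ 4*p → (occ (p+1) e 1 t = 1 ↔ ¬ 2 ∣ t) := by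
      intro t ht ht2
      rcases Nat.even_or_odd' t with ⟨j, hj | hj⟩
      · have := (hocc1 (j-1) (by omega)).2
        rw [show 2*(j-1)+2 = t by omega] at this
        omega
      · have := (hocc1 j (by omega)).1
        rw [← hj] at this
        omega
    -- It suffices to compare a candidate with the first row on the values `4p+2, …, 4p+6`.
    have key : ∀ T : Finset ℕ, (∀ t ∈ T, 4*p+2 ≤ t ∧ t ≤ 4*p+6) →
        4*p+2 ∈ T → (4*p+3 ∈ T ↔ occ (p+1) e 1 (4*p+3) = 1) →
        (4*p+4 ∈ T ↔ occ (p+1) e 1 (4*p+4) = 1) → (4*p+5 ∈ T ↔ occ (p+1) e 1 (4*p+5) = 1) →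
        (4*p+6 ∈ T ↔ occ (p+1) e 1 (4*p+6) = 1) → smallSet (p+1) e 1 = setA (p+1) ∪ T := by
      intro T hT t2 t3 t4 t5 t6
      ext t
      rw [mem_smallSet he le_rfl h2k]
      simp only [setA, Finset.mem_union, Finset.mem_filter, Finset.mem_Icc]
      by_cases hlow : t ≤ 4*p
      · have hnot : t ∉ T := fun h => by have := hT t h; omega
        have := hodd t
        simp only [hnot, or_false]
        constructor
        · rintro ⟨a, b, c⟩
          exact ⟨⟨a, by omega⟩, (this a hlow).mp c⟩
        · rintro ⟨⟨a, b⟩, c⟩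
          exact ⟨a, by omega, (this a hlow).mpr c⟩
      · by_cases hhigh : 4*p+6 < t
        · have hnot : t ∉ T := fun h => by have := hT t h; omega
          simp only [hnot, or_false]
          omega
        · have hcases : t = 4*p+1 ∨ t = 4*p+2 ∨ t = 4*p+3 ∨ t = 4*p+4 ∨ t = 4*p+5 ∨ t = 4*p+6 := by
            omega
          rcases hcases with rfl | rfl | rfl | rfl | rfl | rfl
          · have hnot : 4*p+1 ∉ T := fun h => by have := hT _ h; omega
            simp only [hnot, or_false]
            omega
          · simp only [t2, or_true, iff_true]
            omega
          · rw [t3]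
            omega
          · rw [t4]
            omega
          · rw [t5]
            omega
          · rw [t6]
            omega
    have hfour : (occ (p+1) e 1 (4*p+3) = 1 ∧ occ (p+1) e 1 (4*p+4) = 0 ∧
          occ (p+1) e 1 (4*p+5) = 1 ∧ occ (p+1) e 1 (4*p+6) = 0) ∨
        (occ (p+1) e 1 (4*p+3) = 0 ∧ occ (p+1) e 1 (4*p+4) = 1 ∧
          occ (p+1) e 1 (4*p+5) = 1 ∧ occ (p+1) e 1 (4*p+6) = 0) ∨
        (occ (p+1) e 1 (4*p+3) = 1 ∧ occ (p+1) e 1 (4*p+4) = 1 ∧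
          occ (p+1) e 1 (4*p+5) = 1 ∧ occ (p+1) e 1 (4*p+6) = 1) ∨
        (occ (p+1) e 1 (4*p+3) = 1 ∧ occ (p+1) e 1 (4*p+4) = 1 ∧
          occ (p+1) e 1 (4*p+5) = 0 ∧ occ (p+1) e 1 (4*p+6) = 0) := by
      omega
    rcases hfour with h | h | h | h
    · left
      apply key <;> simp only [Finset.mem_insert, Finset.mem_singleton] <;> omega
    · right; left
      apply key <;> simp only [Finset.mem_insert, Finset.mem_singleton] <;> omega
    · right; right; left
      apply key <;> simp only [Finset.mem_insert, Finset.mem_singleton] <;> omega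
    · right; right; right
      apply key <;> simp only [Finset.mem_insert, Finset.mem_singleton] <;> omega
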